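/- Let σ ∈ (0,1) and n ≥ 1 an integer. Then the series R^σ_n := Σ_{m≥1} K^σ_{m,n} converges and equals (2/π)·sin(πσ)·Γ(2σ)·Γ(n−σ)·n/Γ(n+σ+1); in particular R^σ_n ≥ 0. -/

import Mathlib

open Real Filter

/-- Generalized binomial coefficient via the Gamma function. -/
noncomputable def rbinom (a b : ℝ) : ℝ :=
  Real.Gamma (a + 1) / (Real.Gamma (b + 1) * Real.Gamma (a - b + 1))

/-- Kernel of the fractional Laplacian `(-Δ_ℕ)^σ` on the discrete half-line. -/
noncomputable def Kker (σ : ℝ) (m n : ℕ) : ℝ :=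
  (-1 : ℝ) ^ (m + n) *
    (rbinom (2 * σ) (σ + m - n) - rbinom (2 * σ) (σ + m + n))

/-- Quadratic form of `(-Δ_ℕ)^σ` (used for finitely supported `f` with `f 0 = 0`). -/
noncomputable def Qform (σ : ℝ) (f : ℕ → ℝ) : ℝ :=
  ∑' m : ℕ, ∑' n : ℕ, Kker σ m n * f m * f n

/-- The Hardy-weight `W_{α,σ}`. -/
noncomputable def Wweight (σ α : ℝ) (n : ℕ) : ℝ :=
  4 ^ σ * (Real.Gamma (3/2 - α + σ) * Real.Gamma α /
            (Real.Gamma (α - σ) * Real.Gamma (3/2 - α))) *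
    (Real.Gamma (n + α - σ - 1) * Real.Gamma (n - α + 2) /
      (Real.Gamma (n - α + σ + 2) * Real.Gamma (n + α - 1)))

/-- The Riesz potential `I_α`. -/
noncomputable def Riesz (α : ℝ) (n : ℕ) : ℝ :=
  (4 * n / (4 ^ α * Real.sqrt 2)) * Real.Gamma (3/2 - α) *
    Real.Gamma (n + α - 1) / (Real.Gamma α * Real.Gamma (n - α + 2))

/-!
By Pascal's rule `(-1)^k binom(a, b+k+1)` is a difference of consecutive terms of
`(-1)^k binom(a-1, b+k) = binom(a-1, b) ∏_{i<k} (1 - a/(b+i+1))`, which tends to `0` for `0 < a`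
because the harmonic series diverges; hence `∑_{k ≥ 0} (-1)^k binom(a, b+k+1) = binom(a-1, b)`.
The kernel is a difference of two such series with `a = 2σ`, so
`R^σ_n = (-1)^(n+1) (binom(2σ-1, σ-n) - binom(2σ-1, σ+n))`. The absorption identities turn this
into `(-1)^(n+1) (n/σ) binom(2σ, σ+n)`, and Euler's reflection formula at `n - σ` removes the sign.
-/

section StickBreaking

variable {c : ℕ → ℝ}

lemma tendsto_prod_one_sub_of_not_summable (h0 : ∀ k, 0 ≤ c k) (h1 : ∀ k, c k ≤ 1)
    (hc : ¬Summable c) :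
    Tendsto (fun n ↦ ∏ k ∈ Finset.range n, (1 - c k)) atTop (nhds 0) := by
  have hexp : Tendsto (fun n ↦ Real.exp (-∑ k ∈ Finset.range n, c k)) atTop (nhds 0) :=
    tendsto_exp_neg_atTop_nhds_zero.comp
      ((not_summable_iff_tendsto_nat_atTop_of_nonneg h0).1 hc)
  refine squeeze_zero (fun n ↦ Finset.prod_nonneg fun k _ ↦ sub_nonneg.2 (h1 k)) (fun n ↦ ?_) hexp
  rw [← Finset.sum_neg_distrib, Real.exp_sum]
  exact Finset.prod_le_prod (fun k _ ↦ sub_nonneg.2 (h1 k)) fun k _ ↦ one_sub_le_exp_neg (c k)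

lemma hasSum_mul_prod_one_sub_of_not_summable (h0 : ∀ k, 0 ≤ c k) (h1 : ∀ k, c k ≤ 1)
    (hc : ¬Summable c) :
    HasSum (fun k ↦ c k * ∏ i ∈ Finset.range k, (1 - c i)) 1 := by
  have hnonneg (k : ℕ) : 0 ≤ c k * ∏ i ∈ Finset.range k, (1 - c i) :=
    mul_nonneg (h0 k) (Finset.prod_nonneg fun i _ ↦ sub_nonneg.2 (h1 i))
  have hpartial (n : ℕ) : ∑ k ∈ Finset.range n, c k * ∏ i ∈ Finset.range k, (1 - c i) =
      1 - ∏ k ∈ Finset.range n, (1 - c k) := by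
    induction n with
    | zero => simp
    | succ n ih => rw [Finset.sum_range_succ, ih, Finset.prod_range_succ]; ring
  rw [hasSum_iff_tendsto_nat_of_nonneg hnonneg]
  simpa only [hpartial, sub_zero] using
    (tendsto_prod_one_sub_of_not_summable h0 h1 hc).const_sub 1

end StickBreaking

lemma not_summable_div_add_natCast_add_one {a : ℝ} (ha : a ≠ 0) (b : ℝ) :
    ¬Summable fun k : ℕ ↦ a / (b + k + 1) := by
  have hharmonic := mt (summable_one_div_nat_add_rpow (b + 1) 1).1 (lt_irrefl 1)
  contrapose hharmonic
  refine (hharmonic.mul_left a⁻¹).abs.congr fun k ↦ ?_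
  rw [← mul_div_assoc, inv_mul_cancel₀ ha, abs_one_div, rpow_one, add_comm (k : ℝ), add_right_comm]

section Gamma

-- At the poles of `Γ` this relies on Mathlib's junk value `Γ(-m) = 0`.
lemma inv_Gamma_eq_mul_inv_Gamma_add_one (s : ℝ) : (Gamma s)⁻¹ = s * (Gamma (s + 1))⁻¹ := by
  rcases eq_or_ne s 0 with rfl | hs
  · simp
  · rw [Gamma_add_one hs, mul_inv, mul_inv_cancel_left₀ hs]

lemma inv_Gamma_one_sub {s : ℝ} (hs : ∀ m : ℕ, s ≠ -m) :
    (Gamma (1 - s))⁻¹ = Gamma s * sin (π * s) / π := by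
  have hreflection : Gamma (1 - s) = π / sin (π * s) / Gamma s :=
    eq_div_of_mul_eq (Gamma_ne_zero hs) (by rw [mul_comm, Gamma_mul_Gamma_one_sub])
  rw [hreflection, inv_div, div_div_eq_mul_div]

lemma sin_pi_mul_natCast_sub (n : ℕ) (x : ℝ) :
    sin (π * (n - x)) = (-1) ^ (n + 1) * sin (π * x) := by
  rw [mul_sub, mul_comm π (n : ℝ), sin_nat_mul_pi_sub, pow_succ]
  ring

end Gamma

section Binomial

variable {a : ℝ}

lemma rbinom_symm (a b : ℝ) : rbinom a (a - b) = rbinom a b := by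
  rw [rbinom, rbinom, sub_sub_cancel, mul_comm (Gamma (a - b + 1))]

lemma add_one_mul_rbinom_add_one (ha : a ≠ 0) (b : ℝ) :
    (b + 1) * rbinom a (b + 1) = a * rbinom (a - 1) b := by
  rw [rbinom, rbinom, sub_add_cancel, Gamma_add_one ha, sub_right_comm, sub_sub, div_eq_mul_inv,
    div_eq_mul_inv, mul_inv, mul_inv, inv_Gamma_eq_mul_inv_Gamma_add_one (b + 1)]
  ring

lemma sub_mul_rbinom (ha : a ≠ 0) (b : ℝ) :
    (a - b) * rbinom a b = a * rbinom (a - 1) b := by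
  have h := add_one_mul_rbinom_add_one ha (a - b - 1)
  rwa [sub_add_cancel, rbinom_symm, sub_right_comm, rbinom_symm] at h

lemma rbinom_add_one_eq_add (ha : a ≠ 0) (b : ℝ) :
    rbinom a (b + 1) = rbinom (a - 1) b + rbinom (a - 1) (b + 1) := by
  refine mul_left_cancel₀ ha ?_
  linear_combination add_one_mul_rbinom_add_one ha b + sub_mul_rbinom ha (b + 1)

lemma rbinom_add_one_eq_div_mul (ha : a ≠ 0) {b : ℝ} (hb : b + 1 ≠ 0) :
    rbinom a (b + 1) = a / (b + 1) * rbinom (a - 1) b := by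
  rw [div_mul_eq_mul_div, eq_div_iff hb, mul_comm, add_one_mul_rbinom_add_one ha]

lemma rbinom_sub_one_add_one (ha : a ≠ 0) {b : ℝ} (hb : b + 1 ≠ 0) :
    rbinom (a - 1) (b + 1) = -((1 - a / (b + 1)) * rbinom (a - 1) b) := by
  linear_combination rbinom_add_one_eq_div_mul ha hb - rbinom_add_one_eq_add ha b

lemma neg_one_pow_mul_rbinom_sub_one_eq_mul_prod (ha : a ≠ 0) {b : ℝ}
    (hb : ∀ k : ℕ, b + k + 1 ≠ 0) (k : ℕ) :
    (-1) ^ k * rbinom (a - 1) (b + k) =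
      rbinom (a - 1) b * ∏ i ∈ Finset.range k, (1 - a / (b + i + 1)) := by
  induction k with
  | zero => simp
  | succ k ih =>
    rw [Finset.prod_range_succ, ← mul_assoc, ← ih, Nat.cast_add_one, ← add_assoc,
      rbinom_sub_one_add_one ha (hb k), pow_succ]
    ring

lemma hasSum_neg_one_pow_mul_rbinom_of_le (ha : 0 < a) {b : ℝ} (hab : a ≤ b + 1) :
    HasSum (fun k : ℕ ↦ (-1) ^ k * rbinom a (b + k + 1)) (rbinom (a - 1) b) := by
  have hle (k : ℕ) : a ≤ b + k + 1 := by linarith [k.cast_nonneg (α := ℝ)]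
  have hpos (k : ℕ) : 0 < b + k + 1 := ha.trans_le (hle k)
  have hsum := hasSum_mul_prod_one_sub_of_not_summable (fun k ↦ (div_pos ha (hpos k)).le)
    (fun k ↦ div_le_one_of_le₀ (hle k) (hpos k).le)
    (not_summable_div_add_natCast_add_one ha.ne' b)
  rw [← mul_one (rbinom (a - 1) b)]
  refine (hsum.mul_left (rbinom (a - 1) b)).congr_fun fun k ↦ ?_
  rw [rbinom_add_one_eq_div_mul ha.ne' (hpos k).ne', mul_left_comm,
    neg_one_pow_mul_rbinom_sub_one_eq_mul_prod ha.ne' fun i ↦ (hpos i).ne', mul_left_comm]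

theorem hasSum_neg_one_pow_mul_rbinom (ha : 0 < a) (b : ℝ) :
    HasSum (fun k : ℕ ↦ (-1) ^ k * rbinom a (b + k + 1)) (rbinom (a - 1) b) := by
  -- Peeling off the first term raises `b` by one, so it suffices to treat `a ≤ b + 1`, where the
  -- factors `1 - a / (b + k + 1)` lie in `[0, 1]`.
  obtain ⟨N, hN⟩ := exists_nat_ge (a - (b + 1))
  induction N generalizing b with
  | zero => exact hasSum_neg_one_pow_mul_rbinom_of_le ha (by simpa using hN)
  | succ N ih =>
    have htail := (ih (b + 1) (by push_cast at hN; linarith)).neg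
    have hPascal : rbinom (a - 1) b - rbinom a (b + 1) = -rbinom (a - 1) (b + 1) := by
      rw [rbinom_add_one_eq_add ha.ne']; ring
    rw [← hasSum_nat_add_iff' 1]
    simp only [Finset.sum_range_one, pow_zero, one_mul, Nat.cast_zero, add_zero, hPascal]
    refine htail.congr_fun fun k ↦ ?_
    rw [pow_succ, mul_neg_one, neg_mul, Nat.cast_add_one, ← add_assoc b, add_right_comm b 1]

end Binomial

section Kernel

variable {σ : ℝ}

lemma rbinom_sub_rbinom_eq_div_mul_rbinom (hσ : σ ≠ 0) (x : ℝ) :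
    rbinom (2 * σ - 1) (σ - x) - rbinom (2 * σ - 1) (σ + x) =
      x / σ * rbinom (2 * σ) (σ + x) := by
  have h2σ : 2 * σ ≠ 0 := mul_ne_zero two_ne_zero hσ
  have hsymm : rbinom (2 * σ) (σ - x) = rbinom (2 * σ) (σ + x) := by
    rw [← rbinom_symm]; congr 1; ring
  have hminus := sub_mul_rbinom h2σ (σ - x)
  have hplus := sub_mul_rbinom h2σ (σ + x)
  rw [hsymm] at hminus
  field_simp
  linear_combination (hplus - hminus) / 2

theorem hasSum_Kker (hσ : 0 < σ) (n : ℕ) :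
    HasSum (fun m : ℕ ↦ Kker σ (m + 1) n)
      ((-1) ^ (n + 1) * (n / σ * rbinom (2 * σ) (σ + n))) := by
  have h2σ : 0 < 2 * σ := by positivity
  rw [← rbinom_sub_rbinom_eq_div_mul_rbinom hσ.ne']
  refine (((hasSum_neg_one_pow_mul_rbinom h2σ (σ - n)).sub
    (hasSum_neg_one_pow_mul_rbinom h2σ (σ + n))).mul_left ((-1) ^ (n + 1))).congr_fun fun m ↦ ?_
  have hminus : σ + ↑(m + 1) - n = σ - n + m + 1 := by push_cast; ring
  have hplus : σ + ↑(m + 1) + n = σ + n + m + 1 := by push_cast; ring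
  rw [Kker, hminus, hplus]
  ring

lemma neg_one_pow_mul_div_mul_rbinom_eq (hσ : σ ≠ 0) {n : ℕ} (hσn : ∀ k : ℕ, σ ≠ n + k) :
    (-1) ^ (n + 1) * (n / σ * rbinom (2 * σ) (σ + n)) =
      2 / π * sin (π * σ) * Gamma (2 * σ) * Gamma (n - σ) * n / Gamma (n + σ + 1) := by
  have hreflection : (Gamma (σ - n + 1))⁻¹ =
      (-1) ^ (n + 1) * (sin (π * σ) * Gamma (n - σ) / π) := by
    rw [show σ - n + 1 = 1 - (n - σ) by ring,
      inv_Gamma_one_sub fun k h ↦ hσn k (by linarith), sin_pi_mul_natCast_sub]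
    ring
  have hsign : (-1 : ℝ) ^ (n + 1) * (-1) ^ (n + 1) = 1 := by rw [← mul_pow]; norm_num
  calc (-1) ^ (n + 1) * (n / σ * rbinom (2 * σ) (σ + n))
      = (-1) ^ (n + 1) * (n / σ * (2 * σ * Gamma (2 * σ)) *
          ((Gamma (n + σ + 1))⁻¹ * (Gamma (σ - n + 1))⁻¹)) := by
        rw [rbinom, Gamma_add_one (mul_ne_zero two_ne_zero hσ),
          show 2 * σ - (σ + n) + 1 = σ - n + 1 by ring, add_comm σ, ← mul_inv]
        ring
    _ = ((-1) ^ (n + 1) * (-1) ^ (n + 1)) *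
          (2 / π * sin (π * σ) * Gamma (2 * σ) * Gamma (n - σ) * n / Gamma (n + σ + 1)) := by
        rw [hreflection]
        field_simp
    _ = _ := by rw [hsign, one_mul]

lemma two_div_pi_mul_sin_mul_Gamma_nonneg (hσ0 : 0 ≤ σ) (hσ1 : σ ≤ 1) (n : ℕ) :
    0 ≤ 2 / π * sin (π * σ) * Gamma (2 * σ) * Gamma (n - σ) * n / Gamma (n + σ + 1) := by
  rcases n.eq_zero_or_pos with rfl | hn
  · simp
  have hn1 : (1 : ℝ) ≤ n := by exact_mod_cast hn
  have hsin : 0 ≤ sin (π * σ) :=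
    sin_nonneg_of_nonneg_of_le_pi (by positivity) (mul_le_of_le_one_right pi_pos.le hσ1)
  have hGamma_sub : 0 ≤ Gamma (n - σ) := Gamma_nonneg_of_nonneg (by linarith)
  positivity

end Kernel

theorem stmt_5_general {σ : ℝ} (hσ : 0 < σ) {n : ℕ} (hσn : ∀ k : ℕ, σ ≠ n + k) :
    HasSum (fun m : ℕ ↦ Kker σ (m + 1) n)
      (2 / π * sin (π * σ) * Gamma (2 * σ) * Gamma (n - σ) * n / Gamma (n + σ + 1)) ∧
    (σ ≤ 1 →
      0 ≤ 2 / π * sin (π * σ) * Gamma (2 * σ) * Gamma (n - σ) * n / Gamma (n + σ + 1)) :=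
  ⟨neg_one_pow_mul_div_mul_rbinom_eq hσ.ne' hσn ▸ hasSum_Kker hσ n,
    fun hσ1 ↦ two_div_pi_mul_sin_mul_Gamma_nonneg hσ.le hσ1 n⟩

/-- The potential term `R^σ_n = Σ_{m≥1} K^σ_{m,n}` converges and is nonnegative. -/
theorem stmt_5 (σ : ℝ) (hσ0 : 0 < σ) (hσ1 : σ < 1) (n : ℕ) (hn : 1 ≤ n) :
    Summable (fun m : ℕ => Kker σ (m + 1) n) ∧
    (∑' m : ℕ, Kker σ (m + 1) n) =
      2 / π * Real.sin (π * σ) * Real.Gamma (2 * σ) * Real.Gamma (n - σ) * n /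
        Real.Gamma (n + σ + 1) ∧
    0 ≤ 2 / π * Real.sin (π * σ) * Real.Gamma (2 * σ) * Real.Gamma (n - σ) * n /
        Real.Gamma (n + σ + 1) := by
  have hpole (k : ℕ) : σ ≠ n + k := by
    have hn1 : (1 : ℝ) ≤ n := by exact_mod_cast hn
    exact ((hσ1.trans_le hn1).trans_le (le_add_of_nonneg_right k.cast_nonneg)).ne
  obtain ⟨hsum, hnonneg⟩ := stmt_5_general hσ0 hpole
  exact ⟨hsum.summable, hsum.tsum_eq, hnonneg hσ1.le⟩
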